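/- arXiv:1605.04284 — 12 statements merged into one kernel-verified Lean document; each statement's English description precedes it below -/
import Mathlib

section
/- Let H = (V,E) be a hypergraph, let k ≥ 1 and p ≥ 1 be integers, and let f ≥ 1 be a real number. Suppose there is a set V* ⊆ V with |V*| = k such that at least p hyperedges of E are covered by V*. Suppose moreover that for every subset E₀ ⊆ E and every integer p' ≥ 1 such that at least p' hyperedges of E₀ are covered by V*, there exists a nonempty set V' ⊆ V with |V'| ≤ f·k such that the number of hyperedges of E₀ covered by V' is at least |V'|·p'/(k·f). Then there exists a set E' ⊆ E with |E'| ≥ p such that |⋃_{e∈E'} e| ≤ k·f·(ln p + 1). -/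
open Finset

/-- If a hypergraph `(V, E)` has a set `V*` of `k` vertices covering at
least `p` hyperedges, and one can always find (in any subcollection `E₀` still containing
`p'` hyperedges covered by `V*`) a nonempty vertex set `V'` of size at most `f·k` covering
at least `|V'|·p'/(k·f)` hyperedges of `E₀`, then there are at least `p` hyperedges of `E`
whose union has size at most `k·f·(ln p + 1)`. -/
theorem stmt_0 {α : Type*} [DecidableEq α]
    (V : Finset α) (E : Finset (Finset α)) (hEV : ∀ e ∈ E, e ⊆ V)
    (k p : ℕ) (hk : 1 ≤ k) (hp : 1 ≤ p) (f : ℝ) (hf : 1 ≤ f)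
    (Vstar : Finset α) (hVstar : Vstar ⊆ V) (hVcard : Vstar.card = k)
    (hcov : p ≤ (E.filter (fun e => e ⊆ Vstar)).card)
    (halg : ∀ E₀ ⊆ E, ∀ p' : ℕ, 1 ≤ p' →
      p' ≤ (E₀.filter (fun e => e ⊆ Vstar)).card →
      ∃ V' ⊆ V, V'.Nonempty ∧ (V'.card : ℝ) ≤ f * k ∧
        (V'.card : ℝ) * p' / (k * f) ≤ ((E₀.filter (fun e => e ⊆ V')).card : ℝ)) :
    ∃ E' ⊆ E, p ≤ E'.card ∧
      ((E'.biUnion id).card : ℝ) ≤ k * f * (Real.log p + 1) := by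
  have hkf : (0:ℝ) < k * f := by
    have : (1:ℝ) ≤ k := by exact_mod_cast hk
    positivity
  have key : ∀ q : ℕ, 1 ≤ q → ∀ E₀ ⊆ E, q ≤ (E₀.filter (fun e => e ⊆ Vstar)).card →
      ∃ E' ⊆ E₀, q ≤ E'.card ∧ ((E'.biUnion id).card : ℝ) ≤ k * f * (Real.log q + 1) := by
    intro q
    induction q using Nat.strong_induction_on with
    | _ q ih =>
    intro hq E₀ hE₀ hc
    obtain ⟨V', hV', hne, hle, hcnt⟩ := halg E₀ hE₀ q hq hc
    have hn : (1:ℝ) ≤ V'.card := by exact_mod_cast hne.card_pos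
    have hqr : (1:ℝ) ≤ q := by exact_mod_cast hq
    set C := E₀.filter (fun e => e ⊆ V') with hC
    have hCE : C ⊆ E₀ := Finset.filter_subset _ _
    have hCu : C.biUnion id ⊆ V' := by
      apply Finset.biUnion_subset.2
      intro e he
      exact (Finset.mem_filter.1 he).2
    have hCn : ((C.biUnion id).card : ℝ) ≤ V'.card := by
      exact_mod_cast Finset.card_le_card hCu
    have hlog : 0 ≤ Real.log q := Real.log_nonneg hqr
    by_cases hcq : q ≤ C.card
    · refine ⟨C, hCE, hcq, ?_⟩
      nlinarith [mul_nonneg hkf.le hlog]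
    · push Not at hcq
      have hCpos : 0 < C.card := by
        have : (0:ℝ) < (C.card : ℝ) := lt_of_lt_of_le (by positivity) hcnt
        exact_mod_cast this
      have hrem : q - C.card ≤ ((E₀ \ C).filter (fun e => e ⊆ Vstar)).card := by
        have h1 : E₀.filter (fun e => e ⊆ Vstar) ⊆
            (E₀ \ C).filter (fun e => e ⊆ Vstar) ∪ C := by
          intro e he
          simp only [Finset.mem_union, Finset.mem_filter, Finset.mem_sdiff] at he ⊢
          tauto
        have h2 := (Finset.card_le_card h1).trans (Finset.card_union_le _ _)
        omega
      obtain ⟨F, hF, hFc, hFu⟩ := ih (q - C.card) (by omega) (by omega) (E₀ \ C)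
        (Finset.sdiff_subset.trans hE₀) hrem
      refine ⟨F ∪ C, Finset.union_subset (hF.trans Finset.sdiff_subset) hCE, ?_, ?_⟩
      · have hd : Disjoint F C := Finset.disjoint_of_subset_left hF Finset.sdiff_disjoint
        rw [Finset.card_union_of_disjoint hd]
        omega
      · have hU : (((F ∪ C).biUnion id).card : ℝ) ≤
            (F.biUnion id).card + (C.biUnion id).card := by
          rw [Finset.union_biUnion]
          exact_mod_cast Finset.card_union_le _ _
        have hcast : ((q - C.card : ℕ) : ℝ) = (q:ℝ) - C.card := Nat.cast_sub hcq.le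
        have hlt : (C.card : ℝ) < q := by exact_mod_cast hcq
        rw [hcast] at hFu
        have hq0 : (0:ℝ) < q := by linarith
        have hsub : (0:ℝ) < (q:ℝ) - C.card := by linarith
        have h3 := Real.log_le_sub_one_of_pos (div_pos hsub hq0)
        rw [Real.log_div hsub.ne' hq0.ne'] at h3
        have h4 : ((q:ℝ) - C.card) / q - 1 = - (C.card / q) := by
          field_simp
          ring
        have h5 : (V'.card : ℝ) ≤ k * f * (C.card / q) := by
          rw [div_le_iff₀ hkf] at hcnt
          rw [← mul_div_assoc, le_div_iff₀ hq0]
          linarith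
        have h6 : k * f * (C.card / q) ≤ k * f * (Real.log q - Real.log (q - C.card)) :=
          mul_le_mul_of_nonneg_left (by linarith) hkf.le
        linarith
  exact key p hp E (Finset.Subset.refl E) hcov
end

section
/- Let G = (E, V, F) be a bipartite graph with parts E and V, where |E| = m ≥ 1. Suppose OPT ⊆ E satisfies |OPT| = p and |Γ(OPT)| = r. Let ∅ = E'_0 ⊆ E'_1 ⊆ ⋯ ⊆ E'_l ⊆ E and nonempty sets E''_0, …, E''_{l−1} satisfy, for each i < l: (a) |E'_i| < p − √m; (b) E''_i ⊆ E ∖ E'_i and E''_i has minimum expansion among nonempty subsets of E ∖ E'_i, i.e. |Γ(E''_i)|·|X| ≤ |Γ(X)|·|E''_i| for every nonempty X ⊆ E ∖ E'_i; (c) if |E'_i| + |E''_i| ≤ p then E'_{i+1} = E'_i ∪ E''_i, and otherwise i = l−1 and E'_l consists of E'_{l−1} together with exactly p − |E'_{l−1}| elements of E''_{l−1}. Suppose also that p − √m ≤ |E'_l| ≤ p. Let F' ⊆ E ∖ E'_l be a set of p − |E'_l| elements such that every element of F' has degree (in G) at most the degree of every element of (E ∖ E'_l) ∖ F'. Then |Γ(E'_l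 ∪ F')| ≤ 2√m · r. -/
open Finset

/-- The neighborhood `Γ(X)` of a set `X` of left vertices in the bipartite graph with
edge set `F`. -/
def nbr {ε ν : Type*} [DecidableEq ε] [DecidableEq ν]
    (F : Finset (ε × ν)) (X : Finset ε) : Finset ν :=
  (F.filter (fun q => q.1 ∈ X)).image Prod.snd

lemma nbr_mono' {ε ν : Type*} [DecidableEq ε] [DecidableEq ν]
    (F : Finset (ε × ν)) {X Y : Finset ε} (h : X ⊆ Y) : nbr F X ⊆ nbr F Y := by
  intro v hv
  simp only [nbr, mem_image, mem_filter] at hv ⊢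
  obtain ⟨q, ⟨hq, hx⟩, rfl⟩ := hv
  exact ⟨q, ⟨hq, h hx⟩, rfl⟩

lemma nbr_union_card {ε ν : Type*} [DecidableEq ε] [DecidableEq ν]
    (F : Finset (ε × ν)) (X Y : Finset ε) :
    (nbr F (X ∪ Y)).card ≤ (nbr F X).card + (nbr F Y).card := by
  refine le_trans (card_le_card ?_) (card_union_le _ _)
  intro v hv
  simp only [nbr, mem_image, mem_filter, mem_union] at hv ⊢
  obtain ⟨q, ⟨hq, hx⟩, rfl⟩ := hv
  rcases hx with hx | hx
  · exact Or.inl ⟨q, ⟨hq, hx⟩, rfl⟩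
  · exact Or.inr ⟨q, ⟨hq, hx⟩, rfl⟩

lemma nbr_card_le_mul {ε ν : Type*} [DecidableEq ε] [DecidableEq ν]
    (F : Finset (ε × ν)) (r : ℕ) (X : Finset ε) (h : ∀ e ∈ X, (nbr F {e}).card ≤ r) :
    (nbr F X).card ≤ X.card * r := by
  induction X using Finset.induction_on with
  | empty => simp [nbr]
  | insert a s ha ih =>
    rw [card_insert_of_notMem ha, insert_eq]
    have h1 := nbr_union_card F {a} s
    have h2 := h a (mem_insert_self _ _)
    have h3 := ih (fun e he => h e (mem_insert_of_mem he))
    nlinarith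

/-- Correctness of the greedy minimum-expansion algorithm for
Minimum `p`-Union: the final set `E'_l ∪ F'` has neighborhood of size at most `2√m·r`. -/
theorem stmt_1 {ε ν : Type*} [Fintype ε] [Fintype ν] [DecidableEq ε] [DecidableEq ν]
    (F : Finset (ε × ν)) (m : ℕ) (hm : m = Fintype.card ε) (hm1 : 1 ≤ m)
    (OPT : Finset ε) (p r : ℕ) (hOPT : OPT.card = p) (hr : (nbr F OPT).card = r)
    (l : ℕ) (E' : ℕ → Finset ε) (E'' : ℕ → Finset ε)
    (h0 : E' 0 = ∅)
    (hchain : ∀ i < l, E' i ⊆ E' (i + 1))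
    (hne : ∀ i < l, (E'' i).Nonempty)
    (ha : ∀ i < l, ((E' i).card : ℝ) < (p : ℝ) - Real.sqrt m)
    (hsub : ∀ i < l, E'' i ⊆ (E' i)ᶜ)
    (hmin : ∀ i < l, ∀ X ⊆ (E' i)ᶜ, X.Nonempty →
      (nbr F (E'' i)).card * X.card ≤ (nbr F X).card * (E'' i).card)
    (hstep : ∀ i < l,
      if (E' i).card + (E'' i).card ≤ p then E' (i + 1) = E' i ∪ E'' i
      else i = l - 1 ∧ ∃ D ⊆ E'' i, D.card = p - (E' i).card ∧ E' (i + 1) = E' i ∪ D)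
    (hlow : (p : ℝ) - Real.sqrt m ≤ ((E' l).card : ℝ))
    (hup : (E' l).card ≤ p)
    (F' : Finset ε) (hF'sub : F' ⊆ (E' l)ᶜ)
    (hF'card : F'.card = p - (E' l).card)
    (hdeg : ∀ e ∈ F', ∀ e' ∈ (E' l)ᶜ \ F',
      (nbr F {e}).card ≤ (nbr F {e'}).card) :
    ((nbr F (E' l ∪ F')).card : ℝ) ≤ 2 * Real.sqrt m * r := by
  have hspos : 0 < Real.sqrt m := Real.sqrt_pos.mpr (by exact_mod_cast hm1)
  have hsq : Real.sqrt m * Real.sqrt m = m := Real.mul_self_sqrt (by positivity)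
  have key : ∀ i < l, Real.sqrt m * ((nbr F (E'' i)).card : ℝ) ≤ r * ((E'' i).card : ℝ) := by
    intro i hi
    have hc : p ≤ (OPT \ E' i).card + (E' i).card := by
      have := le_card_sdiff (E' i) OPT
      omega
    have hcR : (p : ℝ) ≤ ((OPT \ E' i).card : ℝ) + ((E' i).card : ℝ) := by exact_mod_cast hc
    have hbig : Real.sqrt m ≤ ((OPT \ E' i).card : ℝ) := by linarith [ha i hi]
    have hX : (OPT \ E' i).Nonempty := by
      rw [← card_pos]
      have : (0 : ℝ) < ((OPT \ E' i).card : ℝ) := by linarith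
      exact_mod_cast this
    have h1 := hmin i hi (OPT \ E' i) (by
      intro x hx
      simp only [mem_sdiff, mem_compl] at hx ⊢
      exact hx.2) hX
    have h2 : (nbr F (OPT \ E' i)).card ≤ r := hr ▸ card_le_card (nbr_mono' F sdiff_subset)
    have h3 : (nbr F (E'' i)).card * (OPT \ E' i).card ≤ r * (E'' i).card :=
      h1.trans (Nat.mul_le_mul_right _ h2)
    have h3R : ((nbr F (E'' i)).card : ℝ) * ((OPT \ E' i).card : ℝ) ≤ r * ((E'' i).card : ℝ) := by
      exact_mod_cast h3
    have h4 : Real.sqrt m * ((nbr F (E'' i)).card : ℝ)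
        ≤ ((OPT \ E' i).card : ℝ) * ((nbr F (E'' i)).card : ℝ) := by gcongr
    linarith
  have step : ∀ i < l, Real.sqrt m * ((nbr F (E' i)).card : ℝ) ≤ r * ((E' i).card : ℝ) →
      Real.sqrt m * ((nbr F (E' i ∪ E'' i)).card : ℝ) ≤ r * ((E' i ∪ E'' i).card : ℝ) := by
    intro i hi h
    have hd : Disjoint (E' i) (E'' i) := by
      rw [Finset.disjoint_left]
      intro x hx hx'
      have := hsub i hi hx'
      simp only [mem_compl] at this
      exact this hx
    rw [card_union_of_disjoint hd]
    have h1 : ((nbr F (E' i ∪ E'' i)).card : ℝ)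
        ≤ ((nbr F (E' i)).card : ℝ) + ((nbr F (E'' i)).card : ℝ) := by
      exact_mod_cast nbr_union_card F (E' i) (E'' i)
    have h2 := mul_le_mul_of_nonneg_left h1 hspos.le
    have h3 := key i hi
    push_cast
    linarith
  have inv : ∀ i < l, Real.sqrt m * ((nbr F (E' i)).card : ℝ) ≤ r * ((E' i).card : ℝ) := by
    intro i
    induction i with
    | zero => intro _; simp [h0, nbr]
    | succ k ih =>
      intro hk
      have hk' : k < l := by omega
      have hs := hstep k hk'
      split_ifs at hs with hc
      · rw [hs]; exact step k hk' (ih hk')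
      · omega
  have hA : ((nbr F (E' l)).card : ℝ) ≤ Real.sqrt m * r := by
    rcases Nat.eq_zero_or_pos l with hl | hl
    · rw [hl, h0]
      simp only [nbr, notMem_empty, filter_false, image_empty, card_empty, Nat.cast_zero]
      positivity
    · obtain ⟨k, rfl⟩ : ∃ k, l = k + 1 := ⟨l - 1, by omega⟩
      have hk : k < k + 1 := Nat.lt_succ_self k
      have hss : E' (k + 1) ⊆ E' k ∪ E'' k := by
        have hs := hstep k hk
        split_ifs at hs with hc
        · exact hs.subset
        · obtain ⟨_, D, hD, _, hE⟩ := hs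
          rw [hE]
          exact union_subset_union_right hD
      have h1 := step k hk (inv k hk)
      have h2 : ((nbr F (E' (k + 1))).card : ℝ) ≤ ((nbr F (E' k ∪ E'' k)).card : ℝ) := by
        exact_mod_cast card_le_card (nbr_mono' F hss)
      have h3 : ((E' k ∪ E'' k).card : ℝ) ≤ m := by
        rw [hm]; exact_mod_cast card_le_univ _
      have h4 : (r : ℝ) * ((E' k ∪ E'' k).card : ℝ) ≤ r * m := by gcongr
      have h5 := mul_le_mul_of_nonneg_left h2 hspos.le
      refine le_of_mul_le_mul_left ?_ hspos
      calc Real.sqrt m * ((nbr F (E' (k + 1))).card : ℝ) ≤ r * m := by linarith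
        _ = Real.sqrt m * (Real.sqrt m * r) := by rw [← mul_assoc, hsq, mul_comm]
  have hdegr : ∀ e ∈ F', (nbr F {e}).card ≤ r := by
    intro e he
    have hin : ∀ x ∈ OPT, (nbr F {x}).card ≤ r := fun x hx =>
      hr ▸ card_le_card (nbr_mono' F (singleton_subset_iff.mpr hx))
    by_cases heO : e ∈ OPT
    · exact hin e heO
    · have hc := le_card_sdiff (E' l) OPT
      have hns : ¬ (OPT \ E' l ⊆ F'.erase e) := by
        intro h
        have h1 := card_le_card h
        have h2 := card_erase_lt_of_mem he
        omega
      obtain ⟨x, hx, hxn⟩ := not_subset.mp hns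
      rw [mem_sdiff] at hx
      have hxe : x ≠ e := fun h => heO (h ▸ hx.1)
      have hxF : x ∉ F' := fun h => hxn (mem_erase.mpr ⟨hxe, h⟩)
      exact (hdeg e he x (by simp [hx.2, hxF])).trans (hin x hx.1)
  have hB : ((nbr F F').card : ℝ) ≤ Real.sqrt m * r := by
    have h1 : ((nbr F F').card : ℝ) ≤ (F'.card : ℝ) * r := by
      exact_mod_cast nbr_card_le_mul F r F' hdegr
    have h2 : (F'.card : ℝ) ≤ Real.sqrt m := by
      rw [hF'card, Nat.cast_sub hup]; linarith
    exact h1.trans (by gcongr)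
  have hU : ((nbr F (E' l ∪ F')).card : ℝ) ≤ ((nbr F (E' l)).card : ℝ) + ((nbr F F').card : ℝ) := by
    exact_mod_cast nbr_union_card F (E' l) F'
  linarith
end

section
/- Let H = (V,E) be a hypergraph with V and E finite and E nonempty. Let y : E → ℝ be nonnegative with ∑_{e∈E} y_e = 1, and let x : V → ℝ be nonnegative with x_i ≥ y_e whenever e ∈ E and i ∈ e. Then there exists a real number r > 0 such that the set E₀ = { e ∈ E : y_e ≥ r } is nonempty and |⋃_{e∈E₀} e| ≤ (∑_{i∈V} x_i) · |E₀|. -/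
open Finset

lemma aux_int (M a : ℝ) (hM : 0 ≤ M) (ha : 0 ≤ a) :
    IntervalIntegrable (fun r : ℝ => (Set.Iic a).indicator (fun _ => (1 : ℝ)) r)
      MeasureTheory.volume 0 M ∧
    ∫ r in (0 : ℝ)..M, (Set.Iic a).indicator (fun _ => (1 : ℝ)) r = min M a := by
  constructor
  · rw [intervalIntegrable_iff]
    refine MeasureTheory.IntegrableOn.indicator ?_ measurableSet_Iic
    exact MeasureTheory.integrableOn_const (by simp)
  · rw [intervalIntegral.integral_of_le hM, MeasureTheory.setIntegral_indicator measurableSet_Iic,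
      Set.Ioc_inter_Iic]
    simp [hM, ha]

/-- Rounding the LP for minimum expansion: given a feasible LP solution
`(x, y)`, there is a threshold `r > 0` such that the nonempty set
`E₀ = {e ∈ E : y_e ≥ r}` satisfies `|⋃_{e∈E₀} e| ≤ (∑_i x_i)·|E₀|`. -/
theorem stmt_3 {α : Type*} [Fintype α] [DecidableEq α]
    (E : Finset (Finset α)) (hE : E.Nonempty)
    (y : Finset α → ℝ) (hy : ∀ e ∈ E, 0 ≤ y e) (hsum : ∑ e ∈ E, y e = 1)
    (x : α → ℝ) (hx : ∀ i : α, 0 ≤ x i) (hxy : ∀ e ∈ E, ∀ i ∈ e, y e ≤ x i) :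
    ∃ r : ℝ, 0 < r ∧ (E.filter (fun e => r ≤ y e)).Nonempty ∧
      (((E.filter (fun e => r ≤ y e)).biUnion id).card : ℝ) ≤
        (∑ i : α, x i) * ((E.filter (fun e => r ≤ y e)).card : ℝ) := by
  by_contra! hcon
  obtain ⟨m, hm, hmax⟩ := E.exists_max_image y hE
  have hM0 : 0 < y m := by
    by_contra! h
    have : ∑ e ∈ E, y e ≤ 0 := Finset.sum_nonpos fun e he => (hmax e he).trans h
    linarith
  set M := y m with hMdef
  set S := ∑ i : α, x i with hS
  let I : ℝ → ℝ → ℝ := fun a r => (Set.Iic a).indicator (fun _ => (1 : ℝ)) r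
  have hI : ∀ a r, I a r = if r ≤ a then 1 else 0 := by
    intro a r; simp [I, Set.indicator_apply]
  have hV : IntervalIntegrable (fun r => ∑ i : α, I (x i) r) MeasureTheory.volume 0 M :=
    by simpa [← Finset.sum_fn] using IntervalIntegrable.sum Finset.univ
        (f := fun i => I (x i)) (fun i _ => (aux_int M (x i) hM0.le (hx i)).1)
  have hW : IntervalIntegrable (fun r => ∑ e ∈ E, I (y e) r) MeasureTheory.volume 0 M :=
    by simpa [← Finset.sum_fn] using IntervalIntegrable.sum E
        (f := fun e => I (y e)) (fun e he => (aux_int M (y e) hM0.le (hy e he)).1)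
  have hpos : 0 < ∫ r in (0 : ℝ)..M, ((∑ i : α, I (x i) r) - S * ∑ e ∈ E, I (y e) r) := by
    refine intervalIntegral.intervalIntegral_pos_of_pos_on (hV.sub (hW.const_mul S)) ?_ hM0
    intro r hr
    have h1 := hcon r hr.1 ⟨m, by simp [hm, ← hMdef, hr.2.le]⟩
    have h2 : (((E.filter (fun e => r ≤ y e)).biUnion id).card : ℝ) ≤
        ((Finset.univ.filter (fun i => r ≤ x i)).card : ℝ) := by
      norm_cast
      apply Finset.card_le_card
      intro i hi
      simp only [Finset.mem_biUnion, Finset.mem_filter, id] at hi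
      obtain ⟨e, ⟨he, hre⟩, hie⟩ := hi
      simpa using hre.trans (hxy e he i hie)
    simp only [hI, Finset.sum_boole]
    linarith
  rw [intervalIntegral.integral_sub hV (hW.const_mul S), intervalIntegral.integral_const_mul,
    intervalIntegral.integral_finsetSum (fun i _ => (aux_int M (x i) hM0.le (hx i)).1),
    intervalIntegral.integral_finsetSum (fun e he => (aux_int M (y e) hM0.le (hy e he)).1),
    Finset.sum_congr rfl (fun i _ => (aux_int M (x i) hM0.le (hx i)).2),
    Finset.sum_congr rfl (fun e he => ((aux_int M (y e) hM0.le (hy e he)).2.trans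
      (min_eq_right (hmax e he)))), hsum] at hpos
  have : ∑ i : α, min M (x i) ≤ S := Finset.sum_le_sum fun i _ => min_le_right _ _
  linarith
end

section
/- Let H = (V,E) be a hypergraph with V and E finite and E nonempty. Then the infimum of ∑_{i∈V} x_i over all pairs (x,y), where y : E → ℝ is nonnegative with ∑_{e∈E} y_e = 1 and x : V → ℝ is nonnegative with x_i ≥ y_e whenever e ∈ E and i ∈ e, equals the minimum over all nonempty subsets E' ⊆ E of |⋃_{e∈E'} e| / |E'|. -/
open Finset

/-- Weak duality by peeling off level sets of `y`. -/
lemma expansion_aux {α : Type*} [Fintype α] [DecidableEq α] (m : ℝ) (n : ℕ) :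
    ∀ (F : Finset (Finset α)), F.card = n →
      (∀ E' ⊆ F, m * (E'.card : ℝ) ≤ ((E'.biUnion id).card : ℝ)) →
      ∀ (x : α → ℝ) (y : Finset α → ℝ), (∀ e ∈ F, 0 ≤ y e) → (∀ i, 0 ≤ x i) →
        (∀ e ∈ F, ∀ i ∈ e, y e ≤ x i) → m * ∑ e ∈ F, y e ≤ ∑ i, x i := by
  induction n with
  | zero =>
    intro F hF _ x y _ hx _
    rw [Finset.card_eq_zero] at hF
    subst hF
    simpa using Finset.sum_nonneg (fun i _ => hx i)
  | succ n ih =>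
    intro F hF hm x y hy hx hxy
    have hne : F.Nonempty := by
      rw [← Finset.card_pos]; omega
    obtain ⟨e0, he0, hmin⟩ := Finset.exists_min_image F y hne
    have h0 := hy e0 he0
    have key := ih (F.erase e0) (by rw [Finset.card_erase_of_mem he0]; omega)
      (fun E' hE' => hm E' (hE'.trans (Finset.erase_subset _ _)))
      (fun i => x i - if i ∈ F.biUnion id then y e0 else 0) (fun e => y e - y e0)
      (fun e he => sub_nonneg.2 (hmin e (Finset.mem_of_mem_erase he)))
      (by
        intro i
        by_cases hi : i ∈ F.biUnion id
        · simp only [hi, if_true]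
          obtain ⟨e, he, hie⟩ := Finset.mem_biUnion.1 hi
          have h1 := hmin e he
          have h2 := hxy e he i hie
          linarith
        · simp only [hi, if_false]
          linarith [hx i])
      (by
        intro e he i hi
        have he' := Finset.mem_of_mem_erase he
        have hU : i ∈ F.biUnion id := Finset.mem_biUnion.2 ⟨e, he', hi⟩
        simp only [hU, if_true]
        linarith [hxy e he' i hi])
    have hs : ∑ e ∈ F.erase e0, (y e - y e0) = ∑ e ∈ F, y e - (F.card : ℝ) * y e0 := by
      have h1 := Finset.add_sum_erase F (fun e => y e - y e0) he0
      have h2 : ∑ e ∈ F, (y e - y e0) = ∑ e ∈ F, y e - (F.card : ℝ) * y e0 := by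
        rw [Finset.sum_sub_distrib, Finset.sum_const, nsmul_eq_mul]
      simp only [sub_self, zero_add] at h1
      rw [h1, h2]
    have hx2 : ∑ i, (x i - if i ∈ F.biUnion id then y e0 else 0)
        = ∑ i, x i - ((F.biUnion id).card : ℝ) * y e0 := by
      rw [Finset.sum_sub_distrib, Finset.sum_ite_mem, Finset.univ_inter, Finset.sum_const,
        nsmul_eq_mul]
    rw [hs, hx2] at key
    have := mul_le_mul_of_nonneg_right (hm F (Finset.Subset.refl _)) h0
    linarith

/-- The optimal value of the LP relaxation for minimum expansion equals
the minimum expansion `|⋃_{e∈E'} e| / |E'|` over nonempty subsets `E' ⊆ E`. -/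
theorem stmt_4 {α : Type*} [Fintype α] [DecidableEq α]
    (E : Finset (Finset α)) (hE : E.Nonempty) :
    sInf {s : ℝ | ∃ (x : α → ℝ) (y : Finset α → ℝ),
        (∀ e ∈ E, 0 ≤ y e) ∧ (∑ e ∈ E, y e = 1) ∧ (∀ i : α, 0 ≤ x i) ∧
        (∀ e ∈ E, ∀ i ∈ e, y e ≤ x i) ∧ s = ∑ i : α, x i} =
      sInf {s : ℝ | ∃ E' ⊆ E, E'.Nonempty ∧
        s = ((E'.biUnion id).card : ℝ) / (E'.card : ℝ)} := by
  set A := {s : ℝ | ∃ (x : α → ℝ) (y : Finset α → ℝ),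
        (∀ e ∈ E, 0 ≤ y e) ∧ (∑ e ∈ E, y e = 1) ∧ (∀ i : α, 0 ≤ x i) ∧
        (∀ e ∈ E, ∀ i ∈ e, y e ≤ x i) ∧ s = ∑ i : α, x i} with hA
  set B := {s : ℝ | ∃ E' ⊆ E, E'.Nonempty ∧
        s = ((E'.biUnion id).card : ℝ) / (E'.card : ℝ)} with hB
  have hBA : B ⊆ A := by
    rintro s ⟨E', hsub, hne, rfl⟩
    have hc : (0 : ℝ) < E'.card := by exact_mod_cast hne.card_pos
    refine ⟨fun i => if i ∈ E'.biUnion id then (E'.card : ℝ)⁻¹ else 0,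
      fun e => if e ∈ E' then (E'.card : ℝ)⁻¹ else 0, ?_, ?_, ?_, ?_, ?_⟩
    · intro e _
      dsimp only
      split_ifs <;> positivity
    · rw [Finset.sum_ite_mem, Finset.inter_eq_right.2 hsub, Finset.sum_const, nsmul_eq_mul]
      exact mul_inv_cancel₀ hc.ne'
    · intro i
      dsimp only
      split_ifs <;> positivity
    · intro e _ i hi
      by_cases he : e ∈ E'
      · have hU : i ∈ E'.biUnion id := Finset.mem_biUnion.2 ⟨e, he, hi⟩
        simp only [he, hU, if_true, le_refl]
      · simp only [he, if_false]
        split_ifs <;> positivity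
    · rw [Finset.sum_ite_mem, Finset.univ_inter, Finset.sum_const, nsmul_eq_mul, div_eq_mul_inv]
  have hBne : B.Nonempty := ⟨_, E, Finset.Subset.refl _, hE, rfl⟩
  have hAbd : BddBelow A := by
    refine ⟨0, ?_⟩
    rintro s ⟨x, y, _, _, hx, _, rfl⟩
    exact Finset.sum_nonneg (fun i _ => hx i)
  apply le_antisymm
  · exact csInf_le_csInf hAbd hBne hBA
  · apply le_csInf (hBne.mono hBA)
    rintro s ⟨x, y, hy, hy1, hx, hxy, rfl⟩
    have := expansion_aux (sInf B) E.card E rfl (by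
      intro E' hE'
      rcases E'.eq_empty_or_nonempty with rfl | hne
      · simp
      · have hc : (0 : ℝ) < E'.card := by exact_mod_cast hne.card_pos
        rw [← le_div_iff₀ hc]
        exact csInf_le (hAbd.mono hBA) ⟨E', hE', hne, rfl⟩) x y hy hx hxy
    rwa [hy1, mul_one] at this
end

section
/- Let H = (V,E) be a 3-uniform hypergraph with |V| = n, let s be an integer with 1 ≤ s ≤ n, let Δ ≥ 0, and let K₁ ⊆ V with |K₁| = s be such that every vertex of K₁ has degree at least Δ in H. Then there exist sets K₂, K₃ ⊆ V with |K₂| = |K₃| = s such that the number of hyperedges of H contained in K₁ ∪ K₂ ∪ K₃ is at least Δ·s³/(27·n²). -/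
open Finset

lemma pick_aux {α β : Type*} [Fintype α] [DecidableEq α] (T : Finset β) (f : β → α)
    (s : ℕ) (hs : s ≤ Fintype.card α) :
    ∃ K : Finset α, K.card = s ∧
      (s : ℝ) * T.card ≤ (Fintype.card α : ℝ) * ((T.filter (fun t => f t ∈ K)).card : ℝ) := by
  classical
  induction s with
  | zero => exact ⟨∅, by simp, by simp⟩
  | succ s ih =>
    obtain ⟨K, hK, hw⟩ := ih (by omega)
    have hc : (Kᶜ).card = Fintype.card α - s := by rw [card_compl, hK]
    have hne : (Kᶜ).Nonempty := by rw [← card_pos]; omega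
    obtain ⟨x, hx, hmax⟩ := exists_max_image Kᶜ (fun x => (T.filter (fun t => f t = x)).card) hne
    have hxK : x ∉ K := by simpa using hx
    have hsum : (T.filter (fun t => f t ∉ K)).card ≤
        (Kᶜ).card * (T.filter (fun t => f t = x)).card := by
      rw [card_eq_sum_card_fiberwise (f := f) (t := Kᶜ) (by intro t ht; simpa using (by simpa using ht : t ∈ T ∧ f t ∉ K).2)]
      rw [← smul_eq_mul]
      refine sum_le_card_nsmul _ _ _ (fun y hy => le_trans (card_le_card ?_) (hmax y hy))
      intro t ht
      simp only [mem_filter] at ht ⊢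
      exact ⟨ht.1.1, ht.2⟩
    have hsplit := card_filter_add_card_filter_not (s := T) (fun t => f t ∈ K)
    have hnew : (T.filter (fun t => f t ∈ insert x K)).card =
        (T.filter (fun t => f t ∈ K)).card + (T.filter (fun t => f t = x)).card := by
      rw [← card_union_of_disjoint]
      · congr 1; ext t; simp only [mem_filter, mem_insert, mem_union]; tauto
      · rw [disjoint_filter]; intro t _ h1 h2; exact hxK (h2 ▸ h1)
    refine ⟨insert x K, by rw [card_insert_of_notMem hxK, hK], ?_⟩
    rw [hnew]
    obtain ⟨d, hd⟩ : ∃ d, Fintype.card α = s + (d + 1) := ⟨Fintype.card α - s - 1, by omega⟩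
    rw [hc, show Fintype.card α - s = d + 1 by omega] at hsum
    rw [hd] at hw ⊢
    generalize (T.filter (fun t => f t ∈ K)).card = w at *
    generalize (T.filter (fun t => f t ∉ K)).card = u at *
    generalize (T.filter (fun t => f t = x)).card = z at *
    rw [← hsplit] at hw ⊢
    have hsum' : (u : ℝ) ≤ (d + 1) * z := by exact_mod_cast hsum
    push_cast at hw ⊢
    have hd0 : (0:ℝ) < (d:ℝ) + 1 := by positivity
    have hs0 : (0:ℝ) ≤ (s:ℝ) := by positivity
    refine le_of_mul_le_mul_left ?_ hd0
    nlinarith [mul_le_mul_of_nonneg_left hsum' (show (0:ℝ) ≤ s + (d + 1) by positivity),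
      mul_le_mul_of_nonneg_left hw (show (0:ℝ) ≤ d by positivity)]

/-- In a 3-uniform hypergraph on `n` vertices, if every vertex of a set
`K₁` of `s` vertices has degree at least `Δ`, then there are sets `K₂, K₃` of `s` vertices
each such that at least `Δ·s³/(27·n²)` hyperedges are contained in `K₁ ∪ K₂ ∪ K₃`. -/
theorem stmt_5 {α : Type*} [Fintype α] [DecidableEq α]
    (E : Finset (Finset α)) (h3 : ∀ e ∈ E, e.card = 3)
    (n : ℕ) (hn : n = Fintype.card α)
    (s : ℕ) (hs1 : 1 ≤ s) (hs2 : s ≤ n)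
    (Δ : ℝ) (hΔ : 0 ≤ Δ)
    (K₁ : Finset α) (hK₁ : K₁.card = s)
    (hdeg : ∀ v ∈ K₁, Δ ≤ ((E.filter (fun e => v ∈ e)).card : ℝ)) :
    ∃ K₂ K₃ : Finset α, K₂.card = s ∧ K₃.card = s ∧
      Δ * (s : ℝ) ^ 3 / (27 * (n : ℝ) ^ 2) ≤
        ((E.filter (fun e => e ⊆ K₁ ∪ K₂ ∪ K₃)).card : ℝ) := by
  classical
  subst hn
  have hne : Nonempty α := Fintype.card_pos_iff.mp (by omega)
  set E' := E.filter (fun e => ∃ v ∈ K₁, v ∈ e) with hE'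
  have hcount : (s : ℝ) * Δ ≤ 3 * (E'.card : ℝ) := by
    have h1 : (s : ℝ) * Δ ≤ ∑ v ∈ K₁, ((E.filter (fun e => v ∈ e)).card : ℝ) := by
      rw [← hK₁, ← nsmul_eq_mul]
      exact card_nsmul_le_sum _ _ _ hdeg
    have h2 : ∑ v ∈ K₁, (E.filter (fun e => v ∈ e)).card ≤ 3 * E'.card := by
      calc ∑ v ∈ K₁, (E.filter (fun e => v ∈ e)).card
          = ∑ v ∈ K₁, (E'.filter (fun e => v ∈ e)).card := by
            refine sum_congr rfl (fun v hv => ?_)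
            congr 1
            ext e
            simp only [hE', mem_filter]
            constructor
            · rintro ⟨a, b⟩; exact ⟨⟨a, v, hv, b⟩, b⟩
            · rintro ⟨⟨a, _⟩, b⟩; exact ⟨a, b⟩
        _ = ∑ e ∈ E', (K₁.filter (fun v => v ∈ e)).card :=
            sum_card_bipartiteAbove_eq_sum_card_bipartiteBelow (fun v e => v ∈ e)
        _ ≤ E'.card • 3 := by
            refine sum_le_card_nsmul _ _ _ (fun e he => ?_)
            rw [← h3 e (mem_filter.mp he).1]
            exact card_le_card (fun v hv => (mem_filter.mp hv).2)
        _ = 3 * E'.card := by rw [smul_eq_mul, mul_comm]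
    refine h1.trans ?_
    exact_mod_cast h2
  have hab : ∀ e : Finset α, ∃ a b : α, e ∈ E' → ∀ y ∈ e, y ∈ K₁ ∨ y = a ∨ y = b := by
    intro e
    by_cases he : e ∈ E'
    · obtain ⟨heE, v, hv, hve⟩ := mem_filter.mp he
      have hc : (e.erase v).card = 2 := by rw [card_erase_of_mem hve, h3 e heE]
      obtain ⟨a, b, _, hab⟩ := card_eq_two.mp hc
      refine ⟨a, b, fun _ y hy => ?_⟩
      by_cases hyv : y = v
      · left; rw [hyv]; exact hv
      · right
        have : y ∈ e.erase v := mem_erase.mpr ⟨hyv, hy⟩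
        rw [hab] at this
        simpa using this
    · exact ⟨hne.some, hne.some, fun h => absurd h he⟩
  choose a b hab using hab
  obtain ⟨K₂, hK₂, h2⟩ := pick_aux E' a s hs2
  obtain ⟨K₃, hK₃, h4⟩ := pick_aux (E'.filter (fun e => a e ∈ K₂)) b s hs2
  refine ⟨K₂, K₃, hK₂, hK₃, ?_⟩
  have hle : (((E'.filter (fun e => a e ∈ K₂)).filter (fun e => b e ∈ K₃)).card : ℝ) ≤
      ((E.filter (fun e => e ⊆ K₁ ∪ K₂ ∪ K₃)).card : ℝ) := by
    norm_cast
    refine card_le_card (fun e he => ?_)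
    obtain ⟨he1, hb⟩ := mem_filter.mp he
    obtain ⟨he2, ha⟩ := mem_filter.mp he1
    refine mem_filter.mpr ⟨(mem_filter.mp he2).1, fun y hy => ?_⟩
    rcases hab e he2 y hy with h | h | h
    · simp [h]
    · simp [h, ha]
    · simp [h, hb]
  have hn0 : (0:ℝ) < (Fintype.card α : ℝ) := by exact_mod_cast (by omega : 0 < Fintype.card α)
  have hs0 : (0:ℝ) ≤ (s:ℝ) := by positivity
  rw [div_le_iff₀ (by positivity)]
  refine le_trans ?_ (mul_le_mul_of_nonneg_right hle (by positivity))
  generalize (((E'.filter (fun e => a e ∈ K₂)).filter (fun e => b e ∈ K₃)).card : ℝ) = X at *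
  generalize ((E'.filter (fun e => a e ∈ K₂)).card : ℝ) = Y at *
  generalize (E'.card : ℝ) = Z at *
  generalize (Fintype.card α : ℝ) = N at *
  have e1 := mul_le_mul_of_nonneg_left hcount (sq_nonneg (s:ℝ))
  have e2 := mul_le_mul_of_nonneg_left h2 hs0
  have e3 := mul_le_mul_of_nonneg_left h4 hn0.le
  have e4 : 0 ≤ Δ * (s:ℝ)^3 := by positivity
  nlinarith
end

section
/- Let G be a finite simple graph with at most Δ edges, let k ≥ 1 be an integer and q > 0 a real number, and suppose there is a vertex set S with |S| ≤ k such that the induced subgraph G[S] has at least q edges. Then there exists a vertex set U such that the induced subgraph G[U] has minimum degree at least q/(2k), |U| ≤ 4·Δ·k/q, and the induced subgraph G[S ∩ U] has more than q/2 edges. -/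
open Finset

/-- Pruning low-degree vertices: if a graph `G` has at most `Δ` edges and
contains a vertex set `S` of at most `k` vertices inducing at least `q` edges, then there
is a vertex set `U` such that `G[U]` has minimum degree at least `q/(2k)`,
`|U| ≤ 4Δk/q`, and `G[S ∩ U]` has more than `q/2` edges. -/
theorem stmt_6 {α : Type*} [Fintype α]
    (G : SimpleGraph α) (Δ : ℝ) (hΔ : (G.edgeSet.ncard : ℝ) ≤ Δ)
    (k : ℕ) (hk : 1 ≤ k) (q : ℝ) (hq : 0 < q)
    (S : Set α) (hS : S.ncard ≤ k)
    (hSedges : q ≤ ({e ∈ G.edgeSet | ∀ v ∈ e, v ∈ S}.ncard : ℝ)) :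
    ∃ U : Set α,
      (∀ u ∈ U, q / (2 * k) ≤ ({v ∈ U | G.Adj u v}.ncard : ℝ)) ∧
      (U.ncard : ℝ) ≤ 4 * Δ * k / q ∧
      q / 2 < ({e ∈ G.edgeSet | ∀ v ∈ e, v ∈ S ∩ U}.ncard : ℝ) := by
  classical
  have hk0 : (0 : ℝ) < k := by exact_mod_cast hk
  obtain ⟨t, ht⟩ : ∃ t : ℝ, t = q / (2 * k) := ⟨_, rfl⟩
  have htpos : 0 < t := by rw [ht]; positivity
  have htk : t * k = q / 2 := by rw [ht]; field_simp
  let E : Set α → ℕ := fun U => {e ∈ G.edgeSet | ∀ v ∈ e, v ∈ S ∩ U}.ncard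
  let P : ℕ → Prop := fun n => ∃ U : Set α, U.ncard = n ∧
    q / 2 + t * ((S ∩ U).ncard : ℝ) ≤ (E U : ℝ)
  have hex : ∃ n, P n := by
    refine ⟨_, Set.univ, rfl, ?_⟩
    have h1 : (S.ncard : ℝ) ≤ k := by exact_mod_cast hS
    have h2 : t * (S.ncard : ℝ) ≤ t * k := mul_le_mul_of_nonneg_left h1 htpos.le
    simp only [E, Set.inter_univ]
    linarith
  obtain ⟨U, hUn, hU⟩ := Nat.find_spec hex
  have hdeg : ∀ u ∈ U, t ≤ ({v ∈ U | G.Adj u v}.ncard : ℝ) := by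
    intro u hu
    by_contra hlt
    push Not at hlt
    have hlt2 : (U \ {u}).ncard < Nat.find hex := by
      rw [← hUn]; exact Set.ncard_diff_singleton_lt_of_mem hu
    apply Nat.find_min hex hlt2
    refine ⟨_, rfl, ?_⟩
    by_cases huS : u ∈ S
    · have hc : (S ∩ (U \ {u})).ncard + 1 = (S ∩ U).ncard := by
        have : S ∩ (U \ {u}) = (S ∩ U) \ {u} := by ext; simp [and_assoc]
        rw [this]
        exact Set.ncard_diff_singleton_add_one ⟨huS, hu⟩
      have hsub : {e ∈ G.edgeSet | ∀ v ∈ e, v ∈ S ∩ U} ⊆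
          {e ∈ G.edgeSet | ∀ v ∈ e, v ∈ S ∩ (U \ {u})} ∪
            (fun v => s(u, v)) '' {v ∈ U | G.Adj u v} := by
        rintro e ⟨he, hv⟩
        by_cases hue : u ∈ e
        · right
          obtain ⟨w, rfl⟩ := hue
          exact ⟨w, ⟨(hv w (by simp)).2, he⟩, rfl⟩
        · left
          refine ⟨he, fun v hve => ⟨(hv v hve).1, (hv v hve).2, ?_⟩⟩
          rintro rfl
          exact hue hve
      have h1 : E U ≤ E (U \ {u}) + {v ∈ U | G.Adj u v}.ncard :=
        (Set.ncard_le_ncard hsub (Set.toFinite _)).trans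
          ((Set.ncard_union_le _ _).trans
            (Nat.add_le_add_left (Set.ncard_image_le (Set.toFinite _)) _))
      have h1' : (E U : ℝ) ≤ E (U \ {u}) + ({v ∈ U | G.Adj u v}.ncard : ℝ) := by
        exact_mod_cast h1
      have hc' : ((S ∩ (U \ {u})).ncard : ℝ) + 1 = (S ∩ U).ncard := by exact_mod_cast hc
      rw [← hc'] at hU
      linarith
    · have : S ∩ (U \ {u}) = S ∩ U := by
        ext x
        simp only [Set.mem_inter_iff, Set.mem_diff, Set.mem_singleton_iff]
        refine ⟨fun h => ⟨h.1, h.2.1⟩, fun h => ⟨h.1, h.2, ?_⟩⟩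
        rintro rfl
        exact huS h.1
      simp only [E, this]
      exact hU
  refine ⟨U, ?_, ?_, ?_⟩
  · rw [← ht]; exact hdeg
  · have hsum : t * (U.ncard : ℝ) ≤ 2 * (G.edgeSet.ncard : ℝ) := by
      have h0 : ∀ u, {v ∈ U | G.Adj u v}.ncard ≤ G.degree u := by
        intro u
        rw [← SimpleGraph.card_neighborFinset_eq_degree, ← Set.ncard_coe_finset]
        refine Set.ncard_le_ncard ?_ (Set.toFinite _)
        intro v hv
        simpa using hv.2
      have h1 : (∑ u, (G.degree u : ℝ)) = 2 * (G.edgeSet.ncard : ℝ) := by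
        have := G.sum_degrees_eq_twice_card_edges
        rw [← Set.ncard_coe_finset, SimpleGraph.coe_edgeFinset] at this
        exact_mod_cast this
      rw [← h1, Set.ncard_eq_toFinset_card' U]
      calc t * (U.toFinset.card : ℝ) = ∑ u ∈ U.toFinset, t := by
            rw [Finset.sum_const, nsmul_eq_mul, mul_comm]
        _ ≤ ∑ u ∈ U.toFinset, (G.degree u : ℝ) := by
            refine Finset.sum_le_sum fun u hu => (hdeg u (by simpa using hu)).trans ?_
            exact_mod_cast h0 u
        _ ≤ ∑ u, (G.degree u : ℝ) :=
            Finset.sum_le_sum_of_subset_of_nonneg (Finset.subset_univ _)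
              (fun _ _ _ => Nat.cast_nonneg _)
    have h2 : t * (U.ncard : ℝ) ≤ 2 * Δ := by linarith
    rw [le_div_iff₀ hq]
    have hq2 : q = 2 * (t * k) := by linarith
    rw [hq2]
    nlinarith [mul_le_mul_of_nonneg_right h2 hk0.le]
  · rcases Set.eq_empty_or_nonempty (S ∩ U) with h | h
    · exfalso
      have hE : E U = 0 := by
        simp only [E, h]
        rw [Set.ncard_eq_zero (Set.toFinite _), Set.eq_empty_iff_forall_notMem]
        rintro e ⟨-, he⟩
        induction e with
        | _ x y => exact he x (by simp)
      rw [hE, h] at hU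
      simp at hU
      linarith
    · have : (0 : ℝ) < (S ∩ U).ncard := by
        exact_mod_cast (Set.ncard_pos (Set.toFinite _)).2 h
      have h3 := mul_pos htpos this
      have h4 : q / 2 < (E U : ℝ) := by linarith
      exact h4
end

section
/- Let G be a finite simple graph on N vertices with minimum degree at least δ, and let t be an integer with 1 ≤ t ≤ N. Then there exist vertex sets S and T with |S| = |T| = t such that the number of edges of G having both endpoints in S ∪ T is at least t²·δ/(2N). -/
open Finset

theorem exists_top_subset {α : Type*} [Fintype α] [DecidableEq α] (f : α → ℝ) (d : ℕ) :
    ∀ t : ℕ, t + d = Fintype.card α → ∃ T : Finset α, T.card = t ∧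
      (t : ℝ) * ∑ v, f v ≤ (Fintype.card α : ℝ) * ∑ v ∈ T, f v := by
  induction d with
  | zero =>
    intro t ht
    refine ⟨Finset.univ, by simpa using ht.symm, ?_⟩
    rw [← ht]; simp
  | succ d ih =>
    intro t ht
    obtain ⟨T, hT, h⟩ := ih (t + 1) (by omega)
    have hne : T.Nonempty := Finset.card_pos.mp (by omega)
    obtain ⟨u, hu, hmin⟩ := T.exists_min_image f hne
    refine ⟨T.erase u, by rw [Finset.card_erase_of_mem hu, hT]; rfl, ?_⟩
    have h1 : ((t : ℝ) + 1) * f u ≤ ∑ v ∈ T, f v := by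
      have := Finset.card_nsmul_le_sum T f (f u) hmin
      rw [hT, nsmul_eq_mul] at this
      push_cast at this
      exact this
    have h2 := Finset.add_sum_erase T f hu
    have hN : (0 : ℝ) ≤ (Fintype.card α : ℝ) := by positivity
    have ht0 : (0 : ℝ) ≤ (t : ℝ) := by positivity
    push_cast at h
    have h3 := mul_le_mul_of_nonneg_left h ht0
    have h4 := mul_le_mul_of_nonneg_left h1 hN
    have hp : (0 : ℝ) < (t : ℝ) + 1 := by positivity
    refine le_of_mul_le_mul_left ?_ hp
    have h5 : ∑ v ∈ T.erase u, f v = ∑ v ∈ T, f v - f u := by linarith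
    rw [h5]
    linarith

theorem pairs_le_edges {α : Type*} [Fintype α] [DecidableEq α]
    (G : SimpleGraph α) [DecidableRel G.Adj] (S T : Finset α) :
    ((S ×ˢ T).filter (fun p => G.Adj p.1 p.2)).card ≤
      2 * {e ∈ G.edgeSet | ∀ v ∈ e, v ∈ S ∪ T}.ncard := by
  classical
  have hfin : {e ∈ G.edgeSet | ∀ v ∈ e, v ∈ S ∪ T}.Finite := Set.toFinite _
  rw [Set.ncard_eq_toFinset_card _ hfin]
  refine Finset.card_le_mul_card_image_of_maps_to (f := fun p : α × α => s(p.1, p.2)) ?_ 2 ?_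
  · rintro ⟨a, b⟩ h
    simp only [Finset.mem_filter, Finset.mem_product] at h
    simp only [Set.Finite.mem_toFinset, Set.mem_setOf_eq, SimpleGraph.mem_edgeSet]
    refine ⟨h.2, ?_⟩
    intro v hv
    rw [Sym2.mem_iff] at hv
    rcases hv with rfl | rfl <;> simp [h.1.1, h.1.2]
  · intro e _
    induction e with
    | _ x y =>
    refine (Finset.card_le_card (t := {(x, y), (y, x)}) ?_).trans Finset.card_le_two
    rintro ⟨a, b⟩ h
    simp only [Finset.mem_filter, Sym2.eq_iff] at h
    simp only [Finset.mem_insert, Finset.mem_singleton, Prod.mk.injEq]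
    exact h.2

/-- In a graph on `N` vertices with minimum degree at least `δ`, for any
`1 ≤ t ≤ N` there are vertex sets `S, T` of size `t` such that at least `t²·δ/(2N)` edges
have both endpoints in `S ∪ T`. -/
theorem stmt_7 {α : Type*} [Fintype α] [DecidableEq α]
    (G : SimpleGraph α) (N : ℕ) (hN : N = Fintype.card α)
    (δ : ℝ) (hδ : ∀ v : α, δ ≤ ((G.neighborSet v).ncard : ℝ))
    (t : ℕ) (ht1 : 1 ≤ t) (ht2 : t ≤ N) :
    ∃ S T : Finset α, S.card = t ∧ T.card = t ∧
      (t : ℝ) ^ 2 * δ / (2 * N) ≤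
        ({e ∈ G.edgeSet | ∀ v ∈ e, v ∈ S ∪ T}.ncard : ℝ) := by
  classical
  obtain ⟨S, -, hS⟩ := Finset.exists_subset_card_eq (s := (Finset.univ : Finset α)) (n := t)
    (by rw [Finset.card_univ]; omega)
  let f : α → ℝ := fun v => ∑ s ∈ S, if G.Adj s v then 1 else 0
  obtain ⟨T, hT, h⟩ := exists_top_subset f (N - t) t (by omega)
  refine ⟨S, T, hS, hT, ?_⟩
  have h1 : (t : ℝ) * δ ≤ ∑ v, f v := by
    simp only [f]
    rw [Finset.sum_comm, ← hS, ← nsmul_eq_mul]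
    refine Finset.card_nsmul_le_sum _ _ _ ?_
    intro s _
    refine (hδ s).trans (le_of_eq ?_)
    rw [Finset.sum_boole, Set.ncard_eq_toFinset_card']
    congr 2
    ext v
    simp
  have h2 : ∑ v ∈ T, f v = (((S ×ˢ T).filter (fun p => G.Adj p.1 p.2)).card : ℝ) := by
    simp only [f]
    rw [Finset.sum_comm, ← Finset.sum_product', Finset.sum_boole]
  have h3 : (((S ×ˢ T).filter (fun p => G.Adj p.1 p.2)).card : ℝ) ≤
      2 * ({e ∈ G.edgeSet | ∀ v ∈ e, v ∈ S ∪ T}.ncard : ℝ) := by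
    exact_mod_cast pairs_le_edges G S T
  rw [← hN, h2] at h
  have hNp : (0 : ℝ) < N := by exact_mod_cast (by omega : 0 < N)
  rw [div_le_iff₀ (by positivity)]
  have h4 := mul_le_mul_of_nonneg_left h1 (Nat.cast_nonneg (α := ℝ) t)
  have h5 := mul_le_mul_of_nonneg_left h3 hNp.le
  linarith
end

section
/- For all real numbers α and β with 0 < α ≤ 1 and β ≥ α, we have min( 2 − α − β , α·(2 − α/min(β,1)) ) ≤ 4·(4 − √3)/13. -/
/-- The exponent trade-off for Densest `k`-Subhypergraph in 3-uniform
hypergraphs: for `0 < α ≤ 1` and `β ≥ α`,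
`min(2 − α − β, α(2 − α/min(β,1))) ≤ 4(4 − √3)/13`. -/
theorem stmt_8 (α β : ℝ) (hα0 : 0 < α) (hα1 : α ≤ 1) (hαβ : α ≤ β) :
    min (2 - α - β) (α * (2 - α / min β 1)) ≤ 4 * (4 - Real.sqrt 3) / 13 := by
  have hs : Real.sqrt 3 * Real.sqrt 3 = 3 := Real.mul_self_sqrt (by norm_num)
  have hs0 := Real.sqrt_nonneg 3
  have hs2 : Real.sqrt 3 < 2 := by nlinarith
  obtain ⟨c, hc⟩ : ∃ c, c = 4 * (4 - Real.sqrt 3) / 13 := ⟨_, rfl⟩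
  have hq : 13 * c ^ 2 - 32 * c + 16 = 0 := by rw [hc]; nlinarith
  have hc1 : 8 / 13 < c := by rw [hc]; linarith
  rw [← hc]
  by_contra! h
  obtain ⟨h1, h2⟩ := lt_min_iff.1 h
  rcases le_total β 1 with hb | hb
  · rw [min_eq_left hb] at h2
    have hβ : 0 < β := by linarith
    have h3 : c * β < 2 * α * β - α ^ 2 := by
      have := mul_lt_mul_of_pos_right h2 hβ
      have e : α * (2 - α / β) * β = 2 * α * β - α ^ 2 := by field_simp
      linarith
    have h4 : 0 < 2 * α - c := by
      by_contra! h5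
      nlinarith [mul_nonneg (sub_nonneg.2 h5) hβ.le, pow_pos hα0 2]
    have h6 := mul_pos h4 (sub_pos.2 h1)
    nlinarith [sq_nonneg (α - (4 - c) / 6), mul_pos h4 (show 0 < 2 - α - β - c by linarith)]
  · rw [min_eq_right hb, div_one] at h2
    nlinarith
end

section
/- For all positive real numbers Δ, d, k, n with d ≤ k², we have max( Δ·k²/n² , d²/(Δ·k) , 1 ) ≥ d / n^{4/5}. -/
/-- For positive reals `Δ, d, k, n` with `d ≤ k²`,
`max(Δk²/n², d²/(Δk), 1) ≥ d/n^{4/5}`. -/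
theorem stmt_10 (Δ d k n : ℝ) (hΔ : 0 < Δ) (hd : 0 < d) (hk : 0 < k) (hn : 0 < n)
    (hdk : d ≤ k ^ 2) :
    d / n ^ ((4 : ℝ) / 5) ≤ max (max (Δ * k ^ 2 / n ^ 2) (d ^ 2 / (Δ * k))) 1 := by
  set m := max (max (Δ * k ^ 2 / n ^ 2) (d ^ 2 / (Δ * k))) 1 with hm
  have h1 : Δ * k ^ 2 / n ^ 2 ≤ m := le_trans (le_max_left _ _) (le_max_left _ _)
  have h2 : d ^ 2 / (Δ * k) ≤ m := le_trans (le_max_right _ _) (le_max_left _ _)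
  have h3 : 1 ≤ m := le_max_right _ _
  have h0 : 0 ≤ m := by linarith
  have hN : (n ^ ((4 : ℝ) / 5)) ^ 5 = n ^ 4 := by
    rw [← Real.rpow_natCast, ← Real.rpow_mul hn.le, ← Real.rpow_natCast]
    norm_num
  refine le_of_pow_le_pow_left₀ (n := 5) (by norm_num) h0 ?_
  rw [div_pow, hN]
  have e : (Δ * k ^ 2 / n ^ 2 * (d ^ 2 / (Δ * k))) ^ 2 = d ^ 4 * k ^ 2 / n ^ 4 := by
    field_simp
  calc d ^ 5 / n ^ 4 = d ^ 4 * d / n ^ 4 := by ring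
    _ ≤ d ^ 4 * k ^ 2 / n ^ 4 := by gcongr
    _ = (Δ * k ^ 2 / n ^ 2 * (d ^ 2 / (Δ * k))) ^ 2 := e.symm
    _ ≤ (m * m) ^ 2 := by gcongr
    _ = m ^ 4 := by ring
    _ ≤ m ^ 5 := pow_le_pow_right₀ h3 (by norm_num)
end

section
/- Let H = (V,E) be a 3-uniform hypergraph, let K₁ ⊆ V, let k ≥ 1 be an integer, and let K ⊆ V with |K| ≤ k. Let P be the set of hyperedges e ∈ E such that e ⊆ K and |e ∩ K₁| ≥ 2. Then there exists a set W ⊆ K with |W| ≤ ⌈2k/3⌉ such that the number of hyperedges of H contained in K₁ ∪ W is at least 2·|P|/9. -/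
open Finset

theorem top_weight {α : Type*} [DecidableEq α] (w : α → ℝ) (K : Finset α) (d : ℕ) :
    d ≤ K.card → ∃ W ⊆ K, W.card + d = K.card ∧
      (W.card : ℝ) * ∑ u ∈ K, w u ≤ (K.card : ℝ) * ∑ u ∈ W, w u := by
  induction d with
  | zero => intro _; exact ⟨K, subset_rfl, by simp, le_rfl⟩
  | succ d ih =>
    intro hd
    obtain ⟨W, hWK, hc, hs⟩ := ih (by omega)
    have hne : W.Nonempty := by
      rw [← Finset.card_pos]; omega
    obtain ⟨u, hu, hmin⟩ := Finset.exists_min_image W w hne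
    have hce := Finset.card_erase_add_one hu
    refine ⟨W.erase u, (Finset.erase_subset _ _).trans hWK, by omega, ?_⟩
    have h1 : (W.card : ℝ) * w u ≤ ∑ x ∈ W, w x := by
      have := Finset.card_nsmul_le_sum W w (w u) hmin
      simpa using this
    have h2 := Finset.add_sum_erase W w hu
    have hn : ((W.erase u).card : ℝ) + 1 = W.card := by exact_mod_cast hce
    rw [← hn] at hs h1
    rw [← h2] at hs h1
    set n : ℝ := ((W.erase u).card : ℝ)
    have hn0 : 0 ≤ n := Nat.cast_nonneg _
    have hN0 : (0 : ℝ) ≤ K.card := Nat.cast_nonneg _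
    have h3 := mul_le_mul_of_nonneg_left hs hn0
    have h4 := mul_le_mul_of_nonneg_left h1 hN0
    have : (n + 1) * (n * ∑ u ∈ K, w u) ≤ (n + 1) * (K.card * ∑ x ∈ W.erase u, w x) := by
      nlinarith
    exact le_of_mul_le_mul_left this (by linarith)

/-- In a 3-uniform hypergraph, if `P` is the set of hyperedges contained
in `K` (where `|K| ≤ k`) meeting `K₁` in at least two vertices, then some `W ⊆ K` with
`|W| ≤ ⌈2k/3⌉` is such that at least `2|P|/9` hyperedges are contained in `K₁ ∪ W`. -/
theorem stmt_11 {α : Type*} [DecidableEq α]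
    (V : Finset α) (E : Finset (Finset α)) (hEV : ∀ e ∈ E, e ⊆ V)
    (h3 : ∀ e ∈ E, e.card = 3)
    (K₁ : Finset α) (hK₁ : K₁ ⊆ V)
    (k : ℕ) (hk : 1 ≤ k) (K : Finset α) (hKV : K ⊆ V) (hK : K.card ≤ k) :
    ∃ W ⊆ K, W.card ≤ ⌈(2 * (k : ℚ)) / 3⌉₊ ∧
      2 * ((E.filter (fun e => e ⊆ K ∧ 2 ≤ (e ∩ K₁).card)).card : ℝ) / 9 ≤
        ((E.filter (fun e => e ⊆ K₁ ∪ W)).card : ℝ) := by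
  classical
  set P := E.filter (fun e => e ⊆ K ∧ 2 ≤ (e ∩ K₁).card) with hP
  have hex : ∀ e ∈ P, ∃ u ∈ K, ∀ x ∈ e, x ≠ u → x ∈ K₁ := by
    intro e he
    rw [hP, Finset.mem_filter] at he
    obtain ⟨heE, heK, he2⟩ := he
    have hc3 := h3 e heE
    have hsd : (e \ K₁).card ≤ 1 := by
      have := Finset.card_sdiff_add_card_inter e K₁
      omega
    rcases (e \ K₁).eq_empty_or_nonempty with h0 | ⟨u, hu⟩
    · obtain ⟨u, hu⟩ : e.Nonempty := by rw [← Finset.card_pos]; omega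
      refine ⟨u, heK hu, fun x hx _ => ?_⟩
      exact Finset.sdiff_eq_empty_iff_subset.1 h0 hx
    · refine ⟨u, heK (Finset.mem_sdiff.1 hu).1, fun x hx hne => ?_⟩
      by_contra hxK
      exact hne (Finset.card_le_one.1 hsd x (Finset.mem_sdiff.2 ⟨hx, hxK⟩) u hu)
  have hcov : ∀ W : Finset α, ∀ e ∈ E, ∀ u ∈ W, (∀ x ∈ e, x ≠ u → x ∈ K₁) → e ⊆ K₁ ∪ W := by
    intro W e _ u hu h x hx
    rw [Finset.mem_union]
    by_cases hxu : x = u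
    · right; rw [hxu]; exact hu
    · exact Or.inl (h x hx hxu)
  rcases P.eq_empty_or_nonempty with hPe | ⟨e0, he0⟩
  · exact ⟨∅, Finset.empty_subset _, by simp, by rw [hPe]; simp⟩
  haveI : Nonempty α := ⟨(hex e0 he0).choose⟩
  choose! f hfK hf using hex
  have hPE : ∀ e ∈ P, e ∈ E := fun e he => (Finset.mem_filter.1 he).1
  have hsum : ∀ W : Finset α, ∑ u ∈ W, ((P.filter (fun e => f e = u)).card : ℝ) ≤
      ((E.filter (fun e => e ⊆ K₁ ∪ W)).card : ℝ) := by
    intro W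
    have h1 := Finset.card_eq_sum_card_fiberwise (s := P.filter (fun e => f e ∈ W)) (t := W)
      (f := f) (fun e he => (Finset.mem_filter.1 he).2)
    have h2 : ∑ u ∈ W, (P.filter (fun e => f e = u)).card = (P.filter (fun e => f e ∈ W)).card := by
      rw [h1]
      refine Finset.sum_congr rfl fun u hu => ?_
      congr 1
      ext e
      simp only [Finset.mem_filter]
      constructor
      · rintro ⟨a, b⟩; exact ⟨⟨a, b ▸ hu⟩, b⟩
      · rintro ⟨⟨a, _⟩, b⟩; exact ⟨a, b⟩
    rw [← Nat.cast_sum, h2]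
    refine Nat.cast_le.2 (Finset.card_le_card fun e he => ?_)
    rw [Finset.mem_filter] at he ⊢
    exact ⟨hPE e he.1, hcov W e (hPE e he.1) _ he.2 (hf e he.1)⟩
  have htot : ∑ u ∈ K, ((P.filter (fun e => f e = u)).card : ℝ) = P.card := by
    rw [← Nat.cast_sum, ← Finset.card_eq_sum_card_fiberwise (s := P) (t := K) (f := f) hfK]
  have hP0 : (0 : ℝ) ≤ P.card := Nat.cast_nonneg _
  by_cases hm : K.card ≤ ⌈(2 * (k : ℚ)) / 3⌉₊
  · refine ⟨K, subset_rfl, hm, ?_⟩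
    have := hsum K
    linarith
  · push Not at hm
    obtain ⟨W, hWK, hc, hs⟩ := top_weight (fun u => ((P.filter (fun e => f e = u)).card : ℝ)) K
      (K.card - ⌈(2 * (k : ℚ)) / 3⌉₊) (Nat.sub_le _ _)
    have hWc : W.card = ⌈(2 * (k : ℚ)) / 3⌉₊ := by omega
    refine ⟨W, hWK, hWc.le, ?_⟩
    have h5 : 2 * K.card ≤ 3 * W.card := by
      have h6 := Nat.le_ceil ((2 * (k : ℚ)) / 3)
      rw [← hWc] at h6
      have h7 : (K.card : ℚ) ≤ k := by exact_mod_cast hK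
      have h8 : (2 * K.card : ℚ) ≤ 3 * W.card := by linarith
      exact_mod_cast h8
    have h5' : (2 * K.card : ℝ) ≤ 3 * W.card := by exact_mod_cast h5
    have hKpos : (0 : ℝ) < K.card := by
      have : 0 < K.card := by omega
      exact_mod_cast this
    have h9 := hsum W
    rw [htot] at hs
    have h10 := mul_le_mul_of_nonneg_right h5' hP0
    have h11 := mul_le_mul_of_nonneg_left h9 hKpos.le
    refine le_of_mul_le_mul_left ?_ hKpos
    have h12 := mul_nonneg hKpos.le hP0
    linarith
end

section
/- Let H be an interval hypergraph with nonempty hyperedges e₁, …, e_m indexed so that their maximal elements satisfy b₁ ≤ ⋯ ≤ b_m, where b_i denotes the largest element of e_i. For 1 ≤ i ≤ m let C_i = { i' : i' ≤ i and e_{i'} ⊆ e_i } (so i ∈ C_i), and for 1 ≤ j ≤ i let A(i,j) denote the minimum of |⋃_{s∈S} e_s| over all sets S ⊆ {1,…,i} with |S| = j and i ∈ S (with the convention A(i',j') = ∞ when j' > i'). Then: (a) for every j with 1 ≤ j ≤ |C_i|, A(i,j) = |e_i|; and (b) for every j with |C_i| < j ≤ i, A(i,j) = min over i' ∈ {1,…,i−1}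 ∖ C_i of ( A(i', j − |C_i ∖ C_{i'}|) + |e_i ∖ e_{i'}| ). -/
open Finset

/-- The dynamic-programming value `A(i,j)`: the minimum of `|⋃_{s∈S} e_s|` over sets `S`
of `j` indices, all at most `i`, with `i ∈ S`; `⊤` (i.e. `∞`) if no such `S` exists. -/
noncomputable def DPval (m : ℕ) (e : Fin m → Finset ℕ) (i : Fin m) (j : ℕ) : ℕ∞ :=
  sInf {c : ℕ∞ | ∃ S : Finset (Fin m), (∀ s ∈ S, s ≤ i) ∧ S.card = j ∧ i ∈ S ∧
    c = ((S.biUnion e).card : ℕ∞)}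

/-- The set `C_i` of indices `i' ≤ i` with `e_{i'} ⊆ e_i`. -/
def Cset (m : ℕ) (e : Fin m → Finset ℕ) (i : Fin m) : Finset (Fin m) :=
  Finset.univ.filter (fun i' => i' ≤ i ∧ e i' ⊆ e i)

theorem interval_key (V : Finset ℕ) (m : ℕ) (e : Fin m → Finset ℕ)
    (hne : ∀ i, (e i).Nonempty)
    (hint : ∀ i, ∃ a b : ℕ, e i = V.filter (fun v => a ≤ v ∧ v ≤ b))
    (hsort : ∀ i j : Fin m, i ≤ j → (e i).max' (hne i) ≤ (e j).max' (hne j))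
    (s k i : Fin m) (hsk : s ≤ k) (hki : k ≤ i) (hn : ¬ e k ⊆ e i)
    (v : ℕ) (hvi : v ∈ e i) (hvs : v ∈ e s) : v ∈ e k := by
  obtain ⟨w, hwk, hwi⟩ := Finset.not_subset.1 hn
  have h1 : w ≤ (e i).max' (hne i) := (Finset.le_max' _ _ hwk).trans (hsort k i hki)
  have h2 : v ≤ (e k).max' (hne k) := (Finset.le_max' _ _ hvs).trans (hsort s k hsk)
  have h3 := Finset.max'_mem _ (hne i)
  have h4 := Finset.max'_mem _ (hne k)
  generalize (e i).max' (hne i) = x at *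
  generalize (e k).max' (hne k) = y at *
  obtain ⟨a, b, hi⟩ := hint i
  obtain ⟨c, d, hk⟩ := hint k
  rw [hi] at hwi h3 hvi
  rw [hk] at hwk h4 ⊢
  simp only [Finset.mem_filter] at *
  obtain ⟨hv, hva, hvb⟩ := hvi
  refine ⟨hv, ?_, by omega⟩
  by_contra hc
  exact hwi ⟨hwk.1, by omega, by omega⟩

theorem DPval_le (m : ℕ) (e : Fin m → Finset ℕ) (i : Fin m) (S : Finset (Fin m))
    (h : ∀ s ∈ S, s ≤ i) (hi : i ∈ S) :
    DPval m e i S.card ≤ ((S.biUnion e).card : ℕ∞) :=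
  sInf_le ⟨S, h, rfl, hi, rfl⟩

theorem mem_Cset_iff (m : ℕ) (e : Fin m → Finset ℕ) (i k : Fin m) :
    k ∈ Cset m e i ↔ k ≤ i ∧ e k ⊆ e i := by
  simp [Cset]

/-- Correctness of the dynamic program for Minimum `p`-Union on interval
hypergraphs: the hyperedges `e_0, …, e_{m-1}` are nonempty intervals of the vertex set
`V ⊆ ℕ`, sorted by their largest elements. Then (a) `A(i,j) = |e_i|` for `1 ≤ j ≤ |C_i|`,
and (b) for `|C_i| < j ≤ i + 1` (with `0`-based indices, edges `e_0, …, e_i` number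
`i + 1`), `A(i,j)` is the minimum over `i' < i`, `i' ∉ C_i`, of
`A(i', j − |C_i ∖ C_{i'}|) + |e_i ∖ e_{i'}|`. -/
theorem stmt_12 (V : Finset ℕ) (m : ℕ) (e : Fin m → Finset ℕ)
    (hne : ∀ i, (e i).Nonempty)
    (hint : ∀ i, ∃ a b : ℕ, e i = V.filter (fun v => a ≤ v ∧ v ≤ b))
    (hsort : ∀ i j : Fin m, i ≤ j → (e i).max' (hne i) ≤ (e j).max' (hne j))
    (i : Fin m) :
    (∀ j : ℕ, 1 ≤ j → j ≤ (Cset m e i).card →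
      DPval m e i j = ((e i).card : ℕ∞)) ∧
    (∀ j : ℕ, (Cset m e i).card < j → j ≤ (i : ℕ) + 1 →
      DPval m e i j =
        ⨅ (i' : Fin m) (_ : i' < i ∧ i' ∉ Cset m e i),
          (DPval m e i' (j - ((Cset m e i) \ (Cset m e i')).card) +
            (((e i \ e i').card : ℕ∞)))) := by
  have key := interval_key V m e hne hint hsort
  have hiC : ∀ i, i ∈ Cset m e i := fun i => (mem_Cset_iff m e i i).2 ⟨le_rfl, subset_rfl⟩
  refine ⟨fun j h1 hj => le_antisymm ?_ ?_, fun j hj hji => le_antisymm ?_ ?_⟩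
  · obtain ⟨S, hS1, hS2, hS3⟩ := Finset.exists_subsuperset_card_eq
      (Finset.singleton_subset_iff.2 (hiC i)) (by simpa using h1) hj
    have hmem : ∀ s ∈ S, s ≤ i ∧ e s ⊆ e i := fun s hs => (mem_Cset_iff m e i s).1 (hS2 hs)
    rw [← hS3]
    refine (DPval_le m e i S (fun s hs => (hmem s hs).1) (hS1 (by simp))).trans ?_
    exact_mod_cast Finset.card_le_card (Finset.biUnion_subset.2 fun s hs => (hmem s hs).2)
  · refine le_sInf ?_
    rintro c ⟨S, -, -, hi, rfl⟩
    exact_mod_cast Finset.card_le_card (Finset.subset_biUnion_of_mem e hi)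
  · refine le_iInf₂ fun k hk => ?_
    obtain ⟨hki, hkC⟩ := hk
    have hn : ¬ e k ⊆ e i := fun h => hkC ((mem_Cset_iff m e i k).2 ⟨hki.le, h⟩)
    rcases eq_or_ne (DPval m e k (j - (Cset m e i \ Cset m e k).card)) ⊤ with htop | htop
    · rw [htop]; simp
    have hne' : {c : ℕ∞ | ∃ S : Finset (Fin m), (∀ s ∈ S, s ≤ k) ∧
        S.card = j - (Cset m e i \ Cset m e k).card ∧ k ∈ S ∧
        c = ((S.biUnion e).card : ℕ∞)}.Nonempty := by
      by_contra hE
      rw [Set.not_nonempty_iff_eq_empty] at hE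
      apply htop
      unfold DPval
      rw [hE, sInf_empty]
    obtain ⟨S, hS, hSc, hkS, hval⟩ := csInf_mem hne'
    change DPval m e k _ = _ at hval
    rw [hval]
    have hle : (Cset m e i \ Cset m e k).card ≤ (Cset m e i).card :=
      Finset.card_le_card Finset.sdiff_subset
    have hdisj : Disjoint S (Cset m e i \ Cset m e k) := by
      rw [Finset.disjoint_left]
      intro s hs hsC
      rw [Finset.mem_sdiff, mem_Cset_iff, mem_Cset_iff] at hsC
      exact hsC.2 ⟨hS s hs, fun v hv => key s k i (hS s hs) hki.le hn v (hsC.1.2 hv) hv⟩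
    have hcard : (S ∪ (Cset m e i \ Cset m e k)).card = j := by
      rw [Finset.card_union_of_disjoint hdisj]; omega
    have hD := DPval_le m e i (S ∪ (Cset m e i \ Cset m e k)) ?_ ?_
    · rw [hcard] at hD
      refine hD.trans ?_
      have hsub : (S ∪ (Cset m e i \ Cset m e k)).biUnion e ⊆ S.biUnion e ∪ (e i \ e k) := by
        intro v hv
        simp only [Finset.mem_biUnion, Finset.mem_union, Finset.mem_sdiff, mem_Cset_iff] at hv ⊢
        obtain ⟨s, hs | hs, hvs⟩ := hv
        · exact Or.inl ⟨s, hs, hvs⟩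
        · by_cases hvk : v ∈ e k
          · exact Or.inl ⟨k, hkS, hvk⟩
          · exact Or.inr ⟨hs.1.2 hvs, hvk⟩
      exact_mod_cast (Finset.card_le_card hsub).trans (Finset.card_union_le _ _)
    · intro s hs
      rcases Finset.mem_union.1 hs with hs | hs
      · exact (hS s hs).trans hki.le
      · exact ((mem_Cset_iff m e i s).1 (Finset.mem_sdiff.1 hs).1).1
    · refine Finset.mem_union_right _ (Finset.mem_sdiff.2 ⟨hiC i, fun h => ?_⟩)
      exact absurd ((mem_Cset_iff m e k i).1 h).1 (not_le.2 hki)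
  · refine le_sInf ?_
    rintro c ⟨S, hS, hSc, hi, rfl⟩
    have hex : (S \ Cset m e i).Nonempty := by
      rw [Finset.sdiff_nonempty]
      intro h
      have := Finset.card_le_card h
      omega
    obtain ⟨k, hkm, hmax⟩ : ∃ k ∈ S \ Cset m e i, ∀ s ∈ S \ Cset m e i, s ≤ k :=
      ⟨_, Finset.max'_mem _ hex, fun s hs => Finset.le_max' _ s hs⟩
    obtain ⟨hkS, hkC⟩ := Finset.mem_sdiff.1 hkm
    have hki : k < i := lt_of_le_of_ne (hS k hkS) fun h => hkC (h ▸ hiC i)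
    have hn : ¬ e k ⊆ e i := fun h => hkC ((mem_Cset_iff m e i k).2 ⟨hki.le, h⟩)
    refine (iInf₂_le k ⟨hki, hkC⟩).trans ?_
    have hle : (Cset m e i \ Cset m e k).card ≤ (Cset m e i).card :=
      Finset.card_le_card Finset.sdiff_subset
    have hsplit := Finset.card_sdiff_add_card_inter (Cset m e i) (Cset m e k)
    have hsplit2 := Finset.card_sdiff_add_card_inter S (Cset m e i)
    have hint2 : (S ∩ Cset m e i).card ≤ (Cset m e i).card :=
      Finset.card_le_card Finset.inter_subset_right
    have hTd : Disjoint (S \ Cset m e i) (Cset m e i ∩ Cset m e k) := by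
      rw [Finset.disjoint_left]
      intro s hs hs'
      exact (Finset.mem_sdiff.1 hs).2 (Finset.mem_inter.1 hs').1
    have hTc := Finset.card_union_of_disjoint hTd
    obtain ⟨T, hT1, hT2, hT3⟩ := Finset.exists_subsuperset_card_eq
      (n := j - (Cset m e i \ Cset m e k).card)
      (Finset.singleton_subset_iff.2
        (Finset.mem_union_left (Cset m e i ∩ Cset m e k) hkm))
      (by rw [Finset.card_singleton]; omega) (by omega)
    have hmem : ∀ s ∈ T, s ≤ k ∧ e s ⊆ (S \ Cset m e i).biUnion e := by
      intro s hs
      rcases Finset.mem_union.1 (hT2 hs) with hs | hs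
      · exact ⟨hmax s hs, Finset.subset_biUnion_of_mem e hs⟩
      · have := (mem_Cset_iff m e k s).1 (Finset.mem_inter.1 hs).2
        exact ⟨this.1, this.2.trans (Finset.subset_biUnion_of_mem e hkm)⟩
    have hD := DPval_le m e k T (fun s hs => (hmem s hs).1) (hT1 (by simp))
    rw [hT3] at hD
    have hd : Disjoint (T.biUnion e) (e i \ e k) := by
      rw [Finset.disjoint_left]
      intro v hv hv'
      obtain ⟨s, hs, hvs⟩ := Finset.mem_biUnion.1 hv
      obtain ⟨hvi, hvk⟩ := Finset.mem_sdiff.1 hv'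
      exact hvk (key s k i (hmem s hs).1 hki.le hn v hvi hvs)
    have hsub : T.biUnion e ∪ (e i \ e k) ⊆ S.biUnion e := by
      refine Finset.union_subset (Finset.biUnion_subset.2 fun s hs => ?_) ?_
      · exact (hmem s hs).2.trans (Finset.biUnion_subset_biUnion_of_subset_left e
          Finset.sdiff_subset)
      · exact Finset.sdiff_subset.trans (Finset.subset_biUnion_of_mem e hi)
    have hfin := Finset.card_le_card hsub
    rw [Finset.card_union_of_disjoint hd] at hfin
    refine (add_le_add_left hD _).trans ?_
    exact_mod_cast hfin
end

section
/- For every real number α, the quantity 1 − 3α + 13α²/4 is positive, and 1 + α/2 − √(1 − 3α + 13α²/4) ≤ 4·(4 − √3)/13, with equality when α = (18 + 2√3)/39. -/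
/-- For every real `α`, the quantity `1 − 3α + 13α²/4` is positive, and
`1 + α/2 − √(1 − 3α + 13α²/4) ≤ 4(4 − √3)/13`, with equality when
`α = (18 + 2√3)/39`. -/
theorem stmt_15 (α : ℝ) :
    0 < 1 - 3 * α + 13 * α ^ 2 / 4 ∧
    1 + α / 2 - Real.sqrt (1 - 3 * α + 13 * α ^ 2 / 4) ≤ 4 * (4 - Real.sqrt 3) / 13 ∧
    (α = (18 + 2 * Real.sqrt 3) / 39 →
      1 + α / 2 - Real.sqrt (1 - 3 * α + 13 * α ^ 2 / 4) = 4 * (4 - Real.sqrt 3) / 13) := by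
  have hs : Real.sqrt 3 ^ 2 = 3 := Real.sq_sqrt (by norm_num)
  have h1 : 1 ≤ Real.sqrt 3 := Real.le_sqrt_of_sq_le (by norm_num)
  generalize Real.sqrt 3 = s at hs h1 ⊢
  have key : 1 - 3 * α + 13 * α ^ 2 / 4
      = (α / 2 + (4 * s - 3) / 13) ^ 2 + 3 * (α - (18 + 2 * s) / 39) ^ 2 := by
    linear_combination (-(16 / 169 + 12 / 1521 : ℝ)) * hs
  refine ⟨by nlinarith [sq_nonneg (α - 6 / 13)], ?_, ?_⟩
  · have := Real.le_sqrt_of_sq_le (x := α / 2 + (4 * s - 3) / 13)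
      (y := 1 - 3 * α + 13 * α ^ 2 / 4)
      (by rw [key]; nlinarith [sq_nonneg (α - (18 + 2 * s) / 39)])
    linarith
  · intro h
    have h0 : α - (18 + 2 * s) / 39 = 0 := by linarith
    rw [key, h0]
    have : (α / 2 + (4 * s - 3) / 13) ^ 2 + 3 * (0 : ℝ) ^ 2
        = (α / 2 + (4 * s - 3) / 13) ^ 2 := by ring
    rw [this, Real.sqrt_sq (by linarith)]
    ring
end
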